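/- Suppose λ_0, …, λ_{ns−1} are pairwise distinct and satisfy the local constraints. Then for any c ≥ 1 pairwise distinct indices a_0, …, a_{c−1} ∈ {0,…,n/s−1} and any nonempty subsets B_0, …, B_{c−1} ⊆ {0,…,s−1} with |B_0| + |B_1| + … + |B_{c−1}| = t ≤ r, the ℓt × ℓt matrix [A_{a_0,B_0}^(t) | A_{a_1,B_1}^(t) | … | A_{a_{c−1},B_{c−1}}^(t)] has nonzero determinant. -/

import Mathlib

open Matrix

/-- The `u`-th digit of `i` in base `s`. -/
def digit (s i u : ℕ) : ℕ := i / s ^ u % s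

open scoped Classical in
/-- The `z`-th entry of the `(i,j)` block (a length-`t` column vector, `0 ≤ z < t`) of the
block matrix `A_{a,b}^{(t)}`; the group size is `g` (`g = s` for the first construction and
`g = s + 1` for the second), so the relevant `λ`-index is `a·s·g + b·s + j_a`. -/
noncomputable def Aent {F : Type*} [Field F] (lam : ℕ → F) (s g a b i j z : ℕ) : F :=
  if i = j then lam (a * s * g + b * s + digit s j a) ^ z
  else if digit s i a = b ∧ digit s j a ≠ b ∧ (∀ u, u ≠ a → digit s i u = digit s j u) then
    -(lam (a * s * g + b * s + digit s j a) ^ z)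
  else 0

/-- `A_{a,b}^{(t)}` as an `ℓt × ℓ` matrix; row `ρ` encodes block row `ρ / t` and
inner row `ρ % t`. -/
noncomputable def Amat {F : Type*} [Field F] (lam : ℕ → F) (s g ℓ a b t : ℕ) :
    Matrix (Fin (ℓ * t)) (Fin ℓ) F :=
  Matrix.of fun ρ j => Aent lam s g a b ((ρ : ℕ) / t) (j : ℕ) ((ρ : ℕ) % t)

/-- The `m`-th smallest element of the finite set `B ⊆ ℕ` (junk value `0` if `m ≥ |B|`). -/
def enum (B : Finset ℕ) (m : ℕ) : ℕ := (B.sort (· ≤ ·)).getD m 0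

/-- `A_{a,B}^{(t)} = [A_{a,b₁}^{(t)} | ⋯ | A_{a,b_v}^{(t)}]` as an `ℓt × ℓ|B|` matrix:
row `ρ` encodes block row `ρ / t` and inner row `ρ % t`; column `κ` selects the
`κ / ℓ`-th member of `B` and inner column `κ % ℓ`. -/
noncomputable def AmatB {F : Type*} [Field F] (lam : ℕ → F) (s g ℓ a t : ℕ) (B : Finset ℕ) :
    Matrix (Fin (ℓ * t)) (Fin (ℓ * B.card)) F :=
  Matrix.of fun ρ κ =>
    Aent lam s g a (enum B ((κ : ℕ) / ℓ)) ((ρ : ℕ) / t) ((κ : ℕ) % ℓ) ((ρ : ℕ) % t)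

/-- The local (in-group) constraints: every square matrix `A_{a,B}` (for a group index
`a < groups` and a nonempty `B ⊆ {0, …, g-1}`) is invertible. -/
def LocalConstraints {F : Type*} [Field F] (lam : ℕ → F) (s g ℓ groups : ℕ) : Prop :=
  ∀ a < groups, ∀ B ⊆ Finset.range g, B.Nonempty → (AmatB lam s g ℓ a B.card B).det ≠ 0

/-- Locate position `κ` within `c` consecutive blocks of sizes `sz 0, sz 1, …`:
returns the block index and the offset within that block. -/
def loc : ℕ → (ℕ → ℕ) → ℕ → ℕ × ℕ
  | 0, _, κ => (0, κ)
  | c + 1, sz, κ =>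
      if κ < sz 0 then (0, κ)
      else
        let p := loc c (fun i => sz (i + 1)) (κ - sz 0)
        (p.1 + 1, p.2)

/-- The horizontal concatenation `[A_{a₀,B₀}^{(t)} | A_{a₁,B₁}^{(t)} | ⋯ | A_{a_{c−1},B_{c−1}}^{(t)}]`
as an `ℓt × ℓt` square matrix (where `t = |B₀| + ⋯ + |B_{c−1}|`). -/
noncomputable def MultiCat {F : Type*} [Field F] (lam : ℕ → F) (s g ℓ t c : ℕ)
    (a : ℕ → ℕ) (B : ℕ → Finset ℕ) : Matrix (Fin (ℓ * t)) (Fin (ℓ * t)) F :=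
  Matrix.of fun ρ κ =>
    let p := loc c (fun m => ℓ * (B m).card) (κ : ℕ)
    Aent lam s g (a p.1) (enum (B p.1) (p.2 / ℓ)) ((ρ : ℕ) / t) (p.2 % ℓ) ((ρ : ℕ) % t)

open Polynomial in
lemma rdiv {R : Type*} [Ring R] [Nontrivial R] (G : R[X]) (hG : G.Monic) (w : R[X]) :
    ∃ q r : R[X], w = q * G + r ∧ r.degree < G.degree := by
  induction h : w.degree using WellFoundedLT.induction generalizing w with
  | ind N ih =>
    by_cases hlt : w.degree < G.degree
    · exact ⟨0, w, by simp, hlt⟩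
    push Not at hlt
    have hG0 : G ≠ 0 := hG.ne_zero
    have hw0 : w ≠ 0 := by
      rintro rfl
      simp at hlt
      exact hG0 hlt
    have hn := natDegree_le_natDegree hlt
    set u := C w.leadingCoeff * X ^ (w.natDegree - G.natDegree) with hu
    have hlc : w.leadingCoeff ≠ 0 := by simpa using hw0
    have hdu : u.degree = (w.natDegree - G.natDegree : ℕ) := by
      rw [hu, degree_C_mul_X_pow _ hlc]
    have hlu : u.leadingCoeff = w.leadingCoeff := by
      rw [hu, leadingCoeff_C_mul_X_pow]
    have h1 : (u * G).degree = w.degree := by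
      rw [hG.degree_mul, hdu, degree_eq_natDegree hG0, degree_eq_natDegree hw0, ← Nat.cast_add,
        Nat.sub_add_cancel hn]
    have h2 : (u * G).leadingCoeff = w.leadingCoeff := by
      rw [leadingCoeff_mul_monic hG, hlu]
    have h3 := degree_sub_lt_left h1.symm hw0 h2.symm
    obtain ⟨q, r, e, hr⟩ := ih _ (h ▸ h3) (w - u * G) rfl
    refine ⟨u + q, r, ?_, hr⟩
    rw [add_mul, add_assoc, ← e]; abel

open Polynomial in
lemma degree_Cmul_le' {R : Type*} [Ring R] (u : R) (p : R[X]) : (C u * p).degree ≤ p.degree := by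
  refine (degree_mul_le _ _).trans ?_
  calc (C u).degree + p.degree ≤ 0 + p.degree := by gcongr; exact degree_C_le
    _ = _ := by simp

open Polynomial in
lemma degree_le_of_lt_one {R : Type*} [Ring R] {p : R[X]} (h : p.degree < 1) : p.degree ≤ 0 := by
  by_cases hp : p = 0
  · simp [hp]
  rw [degree_eq_natDegree hp] at h ⊢
  norm_cast at h ⊢
  omega

open Polynomial in
lemma eval_mul_zero {R : Type*} [Ring R] (x : R) (q G : R[X]) (h : G.eval x = 0) :
    (q * G).eval x = 0 := by
  induction q using Polynomial.induction_on' with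
  | add p q hp hq => rw [add_mul, eval_add, hp, hq, add_zero]
  | monomial n a =>
    rw [← C_mul_X_pow_eq_monomial, mul_assoc, X_pow_mul, eval_C_mul, eval_mul_X_pow, h]; simp

open Polynomial in
lemma eval_mul_comm' {R : Type*} [Ring R] (x : R) (q G : R[X]) (h : ∀ k, Commute (G.coeff k) x) :
    (q * G).eval x = q.eval x * G.eval x := by
  simp only [eval]
  rw [eval₂_mul_noncomm _ _ (by simpa using h)]

open Polynomial in
lemma eval_mul_C_comm {R : Type*} [Ring R] (x u : R) (q : R[X]) (h : Commute u x) :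
    (q * C u).eval x = q.eval x * u := by
  rw [eval_mul_comm', eval_C]
  intro k
  rw [coeff_C]; split_ifs
  · exact h
  · exact Commute.zero_left x

open Polynomial in
/-- unisolvence of a family of right evaluation points -/
def Uni {R : Type*} [Ring R] (X : ℕ → R) (B : Finset ℕ) : Prop :=
  (∀ W : R[X], W.degree < B.card → (∀ b ∈ B, W.eval (X b) = 0) → W = 0) ∧
  (∀ Y : ℕ → R, ∃ W : R[X], W.degree < B.card ∧ ∀ b ∈ B, W.eval (X b) = Y b)

open Polynomial in
lemma uni_monic {R : Type*} [Ring R] [Nontrivial R] (x : ℕ → R) (B : Finset ℕ) (h : Uni x B) :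
    ∃ G : R[X], G.Monic ∧ G.degree = B.card ∧ (∀ b ∈ B, G.eval (x b) = 0) ∧
      (∀ u : R, (∀ b ∈ B, Commute u (x b)) → ∀ k, Commute (G.coeff k) u) ∧
      (∀ u : R, (∀ b ∈ B, Commute u (x b)) → (∀ b ∈ B, IsUnit (x b - u)) →
        ∀ Q, Q * G.eval u = 0 → Q = 0) := by
  obtain ⟨W, hW, hWe⟩ := h.2 (fun b => -(x b) ^ B.card)
  have hm : (X ^ B.card + W).Monic := monic_X_pow_add hW
  have hd : (X ^ B.card + W).degree = (B.card : WithBot ℕ) := by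
    rw [degree_add_eq_left_of_degree_lt, degree_X_pow]
    rwa [degree_X_pow]
  have he : ∀ b ∈ B, (X ^ B.card + W).eval (x b) = 0 := by
    intro b hb
    have h1 := eval_mul_X_pow (p := (1 : R[X])) (x := x b) (k := B.card)
    rw [one_mul, eval_one, one_mul] at h1
    rw [eval_add, hWe b hb, h1, add_neg_cancel]
  refine ⟨X ^ B.card + W, hm, hd, he, ?_, ?_⟩
  · intro u hu k
    have key : C u * W - W * C u = 0 := by
      apply h.1
      · refine lt_of_le_of_lt (degree_sub_le _ _) (max_lt ?_ ?_)
        · refine lt_of_le_of_lt (degree_Cmul_le' _ _) hW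
        · refine lt_of_le_of_lt (degree_mul_le _ _) (lt_of_le_of_lt ?_ hW)
          calc W.degree + (C u).degree ≤ W.degree + 0 := by gcongr; exact degree_C_le
            _ = _ := by simp
      · intro b hb
        rw [eval_sub, eval_C_mul, eval_mul_C_comm _ _ _ (hu b hb), hWe b hb]
        have := ((hu b hb).pow_right B.card).eq
        simp [this]
    have h2 := congrArg (fun p => p.coeff k) key
    simp only [coeff_sub, coeff_C_mul, coeff_mul_C, coeff_zero] at h2
    rw [coeff_add, coeff_X_pow]
    refine Commute.add_left ?_ (sub_eq_zero.mp h2).symm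
    split_ifs
    · exact Commute.one_left u
    · exact Commute.zero_left u
  · intro u hu hreg Q hQ
    set G := X ^ B.card + W
    obtain ⟨q, r, e, hr⟩ := rdiv (X - C u) (monic_X_sub_C u) (C Q * G)
    rw [degree_X_sub_C] at hr
    have hr' := eq_C_of_degree_le_zero (degree_le_of_lt_one hr)
    have hr0 : r = 0 := by
      have := congrArg (eval u) e
      rw [eval_C_mul, hQ, eval_add, eval_mul_zero u q (X - C u) (by simp), hr', eval_C] at this
      rw [hr', ← zero_add (r.coeff 0), ← this, C_0]
    rw [hr0, add_zero] at e
    have hq : q = 0 := by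
      apply h.1
      · have h1 : (q * (X - C u)).degree ≤ (B.card : WithBot ℕ) := by
          rw [← e, ← hd]; exact degree_Cmul_le' _ _
        rw [(monic_X_sub_C u).degree_mul, degree_X_sub_C] at h1
        by_cases hq0 : q = 0
        · rw [hq0, degree_zero]; exact WithBot.bot_lt_coe _
        rw [degree_eq_natDegree hq0] at h1 ⊢
        norm_cast at h1 ⊢
      · intro b hb
        have := congrArg (eval (x b)) e
        rw [eval_C_mul, he b hb, mul_sub, eval_sub, eval_mul_X, eval_mul_C_comm _ _ _ (hu b hb),
          mul_zero, ← mul_sub] at this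
        exact (hreg b hb).mul_left_eq_zero.mp this.symm
    rw [hq, zero_mul] at e
    have := congrArg (fun p => p.coeff G.natDegree) e
    simpa [hm.coeff_natDegree] using this

open Polynomial in
lemma uni_multi {R : Type*} [Ring R] [Nontrivial R] (x : ℕ → ℕ → R) (B : ℕ → Finset ℕ)
    (S : Finset ℕ) (hU : ∀ m ∈ S, Uni (x m) (B m))
    (hcomm : ∀ m ∈ S, ∀ m' ∈ S, m ≠ m' → ∀ b ∈ B m, ∀ b' ∈ B m', Commute (x m b) (x m' b'))
    (hreg : ∀ m ∈ S, ∀ m' ∈ S, m ≠ m' → ∀ b ∈ B m, ∀ b' ∈ B m', IsUnit (x m b - x m' b'))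
    (W : R[X]) (hW : W.degree < (∑ m ∈ S, (B m).card : ℕ))
    (h0 : ∀ m ∈ S, ∀ b ∈ B m, W.eval (x m b) = 0) : W = 0 := by
  induction S using Finset.induction_on generalizing W with
  | empty =>
    simpa using hW
  | insert m S hm ih =>
    obtain ⟨G, hG, hd, he, hc, hr⟩ := uni_monic (x m) (B m) (hU m (by simp))
    obtain ⟨q, r, e, hrd⟩ := rdiv G hG W
    have hr0 : r = 0 := by
      apply (hU m (by simp)).1 r (hd ▸ hrd)
      intro b hb
      have := h0 m (by simp) b hb
      rwa [e, eval_add, eval_mul_zero _ _ _ (he b hb), zero_add] at this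
    rw [hr0, add_zero] at e
    have hq : q = 0 := by
      apply ih (fun m' h' => hU m' (by simp [h']))
        (fun m1 h1 m2 h2 => hcomm m1 (by simp [h1]) m2 (by simp [h2]))
        (fun m1 h1 m2 h2 => hreg m1 (by simp [h1]) m2 (by simp [h2]))
      · rw [Finset.sum_insert hm, e, hG.degree_mul, hd] at hW
        by_cases hq0 : q = 0
        · rw [hq0, degree_zero]; exact WithBot.bot_lt_coe _
        rw [degree_eq_natDegree hq0] at hW ⊢
        norm_cast at hW ⊢
        omega
      · intro m' h' b' hb'
        have hne : m ≠ m' := by rintro rfl; exact hm h'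
        have hcm : ∀ b ∈ B m, Commute (x m' b') (x m b) := fun b hb =>
          (hcomm m (by simp) m' (by simp [h']) hne b hb b' hb').symm
        have := h0 m' (by simp [h']) b' hb'
        rw [e, eval_mul_comm' _ _ _ (hc _ hcm)] at this
        exact hr _ hcm (fun b hb => hreg m (by simp) m' (by simp [h']) hne b hb b' hb') _ this
    rw [e, hq, zero_mul]

noncomputable section MatPart

open Matrix Polynomial

variable {F : Type*} [Field F] {m s : ℕ}

/-- substitution matrix -/
def Sm (F : Type*) [Field F] (a : Fin m) (b : Fin s) :
    Matrix (Fin m → Fin s) (Fin m → Fin s) F :=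
  Matrix.of fun i j => if i = Function.update j a b then 1 else 0

/-- diagonal matrix depending on one digit -/
def Dg (a : Fin m) (f : Fin s → F) : Matrix (Fin m → Fin s) (Fin m → Fin s) F :=
  Matrix.diagonal fun j => f (j a)

/-- indicator diagonal -/
def Em (F : Type*) [Field F] (a : Fin m) (b : Fin s) :
    Matrix (Fin m → Fin s) (Fin m → Fin s) F :=
  Dg a fun y => if y = b then 1 else 0

/-- eigenbasis -/
def Pm (F : Type*) [Field F] (a : Fin m) (b : Fin s) :
    Matrix (Fin m → Fin s) (Fin m → Fin s) F := 1 - (Sm F a b - Em F a b)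

/-- inverse eigenbasis -/
def Pi' (F : Type*) [Field F] (a : Fin m) (b : Fin s) :
    Matrix (Fin m → Fin s) (Fin m → Fin s) F := 1 + (Sm F a b - Em F a b)

lemma SS (a : Fin m) (b : Fin s) : Sm F a b * Sm F a b = Sm F a b := by
  ext i j
  simp [Sm, Matrix.mul_apply]

lemma SE (a : Fin m) (b : Fin s) : Sm F a b * Em F a b = Em F a b := by
  ext i j
  simp only [Sm, Em, Dg, Matrix.mul_diagonal, Matrix.of_apply, Matrix.diagonal_apply]
  by_cases h : j a = b
  · subst h; simp
    split_ifs <;> simp_all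
  · simp [h]
    rintro rfl
    exact h

lemma ES (a : Fin m) (b : Fin s) : Em F a b * Sm F a b = Sm F a b := by
  ext i j
  simp only [Sm, Em, Dg, Matrix.diagonal_mul, Matrix.of_apply]
  by_cases h : i = Function.update j a b
  · subst h; simp
  · simp [h]

lemma EE (a : Fin m) (b : Fin s) : Em F a b * Em F a b = Em F a b := by
  simp only [Em, Dg, Matrix.diagonal_mul_diagonal]
  congr 1; ext j; split_ifs <;> simp

lemma P_Pi (a : Fin m) (b : Fin s) : Pm F a b * Pi' F a b = 1 := by
  simp only [Pm, Pi', mul_add, add_mul, sub_mul, mul_sub, SS, SE, ES, EE, mul_one, one_mul]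
  abel

lemma Pi_P (a : Fin m) (b : Fin s) : Pi' F a b * Pm F a b = 1 := by
  simp only [Pm, Pi', mul_add, add_mul, sub_mul, mul_sub, SS, SE, ES, EE, mul_one, one_mul]
  abel

lemma comm_SS {a a' : Fin m} (h : a ≠ a') (b b' : Fin s) :
    Commute (Sm F a b) (Sm F a' b') := by
  ext i j
  simp [Sm, Matrix.mul_apply]
  rw [Function.update_comm h]

lemma comm_SD {a a' : Fin m} (h : a ≠ a') (b : Fin s) (f : Fin s → F) :
    Commute (Sm F a b) (Dg a' f) := by
  ext i j
  simp only [Sm, Dg, Matrix.diagonal_mul, Matrix.mul_diagonal, Matrix.of_apply]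
  by_cases hh : i = Function.update j a b
  · subst hh; simp [Function.update_of_ne h.symm]
  · simp [hh]

lemma comm_DD (a a' : Fin m) (f f' : Fin s → F) : Commute (Dg a f) (Dg a' f') := by
  simp only [Commute, SemiconjBy, Dg, Matrix.diagonal_mul_diagonal]
  congr 1; ext j; ring

lemma comm_ND {a a' : Fin m} (h : a ≠ a') (b : Fin s) (f : Fin s → F) :
    Commute (Sm F a b - Em F a b) (Dg a' f) :=
  (comm_SD h b f).sub_left (comm_DD _ _ _ _)

lemma comm_NN {a a' : Fin m} (h : a ≠ a') (b b' : Fin s) :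
    Commute (Sm F a b - Em F a b) (Sm F a' b' - Em F a' b') :=
  ((comm_SS h b b').sub_left (comm_SD h.symm b' _).symm).sub_right (comm_ND h b _)

/-- the block Vandermonde node -/
def Xm (a : Fin m) (b : Fin s) (f : Fin s → F) :
    Matrix (Fin m → Fin s) (Fin m → Fin s) F := Pm F a b * Dg a f * Pi' F a b

lemma comm_PD {a a' : Fin m} (h : a ≠ a') (b : Fin s) (f : Fin s → F) :
    Commute (Pm F a b) (Dg a' f) := (Commute.one_left _).sub_left (comm_ND h b f)

lemma comm_PiD {a a' : Fin m} (h : a ≠ a') (b : Fin s) (f : Fin s → F) :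
    Commute (Pi' F a b) (Dg a' f) := (Commute.one_left _).add_left (comm_ND h b f)

lemma comm_PN {a a' : Fin m} (h : a ≠ a') (b b' : Fin s) :
    Commute (Pm F a b) (Sm F a' b' - Em F a' b') :=
  (Commute.one_left _).sub_left (comm_NN h b b')

lemma comm_PiN {a a' : Fin m} (h : a ≠ a') (b b' : Fin s) :
    Commute (Pi' F a b) (Sm F a' b' - Em F a' b') :=
  (Commute.one_left _).add_left (comm_NN h b b')

lemma comm_PX {a a' : Fin m} (h : a ≠ a') (b b' : Fin s) (f : Fin s → F) :
    Commute (Pm F a b) (Xm a' b' f) :=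
  (((Commute.one_right _).sub_right (comm_PN h b b')).mul_right (comm_PD h b f)).mul_right
    ((Commute.one_right _).add_right (comm_PN h b b'))

lemma comm_PiX {a a' : Fin m} (h : a ≠ a') (b b' : Fin s) (f : Fin s → F) :
    Commute (Pi' F a b) (Xm a' b' f) :=
  (((Commute.one_right _).sub_right (comm_PiN h b b')).mul_right (comm_PiD h b f)).mul_right
    ((Commute.one_right _).add_right (comm_PiN h b b'))

lemma comm_DX {a a' : Fin m} (h : a ≠ a') (b' : Fin s) (f f' : Fin s → F) :
    Commute (Dg a f) (Xm a' b' f') :=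
  ((comm_PD h.symm b' f).symm.mul_right (comm_DD _ _ _ _)).mul_right (comm_PiD h.symm b' f).symm

lemma comm_XX {a a' : Fin m} (h : a ≠ a') (b b' : Fin s) (f f' : Fin s → F) :
    Commute (Xm a b f) (Xm a' b' f') :=
  ((comm_PX h b b' f').mul_left (comm_DX h b' f f')).mul_left (comm_PiX h b b' f')

lemma unit_XX {a a' : Fin m} (h : a ≠ a') (b b' : Fin s) (f f' : Fin s → F)
    (hf : ∀ y y', f y ≠ f' y') : IsUnit (Xm a b f - Xm a' b' f') := by
  have hP : ∀ (a : Fin m) (b : Fin s), IsUnit (Pm F a b) := fun a b =>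
    ⟨⟨_, _, P_Pi a b, Pi_P a b⟩, rfl⟩
  have hPi : ∀ (a : Fin m) (b : Fin s), IsUnit (Pi' F a b) := fun a b =>
    ⟨⟨_, _, Pi_P a b, P_Pi a b⟩, rfl⟩
  have hD : IsUnit (Dg a f - Dg a' f') := by
    rw [Dg, Dg, Matrix.diagonal_sub, Matrix.isUnit_diagonal, Pi.isUnit_iff]
    intro j
    exact (sub_ne_zero.mpr (hf _ _)).isUnit
  have key : Xm a b f - Xm a' b' f'
      = Pm F a b * (Pm F a' b' * (Dg a f - Dg a' f') * Pi' F a' b') * Pi' F a b := by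
    have h1 : Pm F a' b' * Dg a f * Pi' F a' b' = Dg a f := by
      rw [(comm_PD h.symm b' f).eq, mul_assoc, P_Pi, mul_one]
    have h2 : Pm F a b * Xm a' b' f' * Pi' F a b = Xm a' b' f' := by
      rw [(comm_PX h b b' f').eq, mul_assoc, P_Pi, mul_one]
    rw [mul_sub, sub_mul, mul_sub, sub_mul, h1]
    change _ = _ - Pm F a b * Xm a' b' f' * Pi' F a b
    rw [h2]; rfl
  rw [key]
  exact ((hP _ _).mul (((hP _ _).mul hD).mul (hPi _ _))).mul (hPi _ _)

lemma X_pow_P (a : Fin m) (b : Fin s) (f : Fin s → F) (z : ℕ) :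
    Xm a b f ^ z * Pm F a b = Pm F a b * Dg a (fun y => f y ^ z) := by
  induction z with
  | zero =>
    have : (Dg a (fun _ => 1) : Matrix (Fin m → Fin s) (Fin m → Fin s) F) = 1 := by
      simp [Dg]
    simp [this]
  | succ z ih =>
    have : (Dg a (fun y => f y ^ (z + 1)) : Matrix (Fin m → Fin s) (Fin m → Fin s) F)
        = Dg a (fun y => f y ^ z) * Dg a f := by
      simp [Dg, pow_succ]
    rw [this, ← mul_assoc, ← ih, pow_succ, mul_assoc, mul_assoc]
    congr 1
    rw [Xm, mul_assoc, Pi_P, mul_one]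

lemma eval_P (a : Fin m) (b : Fin s) (f : Fin s → F)
    (W : (Matrix (Fin m → Fin s) (Fin m → Fin s) F)[X]) (N : ℕ) (hW : W.degree < N)
    (i' j : Fin m → Fin s) :
    (W.eval (Xm a b f) * Pm F a b) i' j
      = ∑ i, ∑ z : Fin N, W.coeff z i' i * (Pm F a b i j * f (j a) ^ (z : ℕ)) := by
  have h1 : W.eval (Xm a b f) = ∑ z ∈ Finset.range N, W.coeff z * Xm a b f ^ z := by
    by_cases h0 : W = 0
    · simp [h0]
    · apply eval_eq_sum_range'
      exact (natDegree_lt_iff_degree_lt h0).mpr hW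
  rw [h1, Finset.sum_mul, Finset.sum_range, Matrix.sum_apply, Finset.sum_comm]
  refine Finset.sum_congr rfl fun z _ => ?_
  rw [mul_assoc, X_pow_P, Matrix.mul_apply]
  refine Finset.sum_congr rfl fun i _ => ?_
  rw [Dg, Matrix.mul_diagonal]

/-- index equivalence -/
abbrev ee (m s : ℕ) : (Fin m → Fin s) ≃ Fin (s ^ m) := finFunctionFinEquiv

lemma digit_ee (j : Fin m → Fin s) (a : Fin m) : digit s (ee m s j : ℕ) a = j a := by
  have := congrArg (fun g => (g a : ℕ)) ((ee m s).symm_apply_apply j)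
  simpa [finFunctionFinEquiv, digit] using this

lemma digit_ee_ge (j : Fin m → Fin s) (u : ℕ) (h : m ≤ u) : digit s (ee m s j : ℕ) u = 0 := by
  unfold digit
  rcases Nat.eq_zero_or_pos s with rfl | hs
  · rcases Nat.eq_zero_or_pos m with rfl | hm
    · have := (ee 0 0 j).isLt
      simp at this
      simp [this]
    · exact (j ⟨0, hm⟩).elim0
  rw [Nat.div_eq_of_lt, Nat.zero_mod]
  exact lt_of_lt_of_le (ee m s j).isLt (Nat.pow_le_pow_right hs h)

lemma Aent_ee (lam : ℕ → F) (a : Fin m) (b : Fin s) (i j : Fin m → Fin s) (z : ℕ) :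
    Aent lam s s a b (ee m s i : ℕ) (ee m s j : ℕ) z
      = Pm F a b i j * lam (a * s * s + b * s + j a) ^ z := by
  have hij : ((ee m s i : ℕ) = (ee m s j : ℕ)) ↔ i = j := by
    rw [← Fin.ext_iff]; exact (ee m s).injective.eq_iff
  have hc : (digit s (ee m s i : ℕ) a = b ∧ digit s (ee m s j : ℕ) a ≠ b ∧
      (∀ u, u ≠ (a : ℕ) → digit s (ee m s i : ℕ) u = digit s (ee m s j : ℕ) u))
      ↔ (i = Function.update j a b ∧ j a ≠ b) := by
    rw [digit_ee, digit_ee]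
    constructor
    · rintro ⟨h1, h2, h3⟩
      refine ⟨?_, fun h => h2 (by rw [h])⟩
      ext u
      by_cases hu : u = a
      · subst hu; simp [h1]
      · rw [Function.update_of_ne hu]
        have := h3 u (fun h => hu (Fin.ext h))
        rwa [digit_ee, digit_ee] at this
    · rintro ⟨rfl, h2⟩
      refine ⟨by simp, fun h => h2 (Fin.ext h), fun u hu => ?_⟩
      rcases lt_or_ge u m with hm | hm
      · have h5 := digit_ee (Function.update j a b) ⟨u, hm⟩
        have h6 := digit_ee j ⟨u, hm⟩
        simp only at h5 h6
        rw [h5, h6, Function.update_of_ne]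
        intro h
        exact hu (congrArg Fin.val h)
      · rw [digit_ee_ge _ _ hm, digit_ee_ge _ _ hm]
  unfold Aent
  rw [digit_ee j a] at *
  simp only [hij, hc]
  simp only [Pm, Sm, Em, Dg, Matrix.sub_apply, Matrix.of_apply, Matrix.one_apply,
    Matrix.diagonal_apply]
  by_cases h : i = j
  · subst h
    by_cases hb : i a = b
    · subst hb; simp
    · have : i ≠ Function.update i a b := by
        intro h
        apply hb
        rw [h]; simp
      simp [this, hb]
  · by_cases hb : j a = b
    · have : i ≠ Function.update j a b := by
        rw [← hb]; simpa using h
      simp [h, this]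
    · by_cases h2 : i = Function.update j a b
      · simp only [if_neg h, if_pos h2]; rw [if_pos ⟨h2, hb⟩]; ring
      · simp [h, h2]

/-- row vector of a matrix polynomial -/
def rowv (W : (Matrix (Fin m → Fin s) (Fin m → Fin s) F)[X]) (N : ℕ) (i' : Fin m → Fin s) :
    Fin (s ^ m * N) → F := fun ρ => W.coeff ((ρ : ℕ) % N) i' ((ee m s).symm ρ.divNat)

/-- node function -/
def nodef (lam : ℕ → F) (a : Fin m) (b : Fin s) : Fin s → F :=
  fun y => lam (a * s * s + b * s + y)

lemma eval_P_row (lam : ℕ → F) (a : Fin m) (b : Fin s)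
    (W : (Matrix (Fin m → Fin s) (Fin m → Fin s) F)[X]) (N : ℕ) (hW : W.degree < N)
    (i' j : Fin m → Fin s) :
    (W.eval (Xm a b (nodef lam a b)) * Pm F a b) i' j
      = ∑ ρ : Fin (s ^ m * N), rowv W N i' ρ *
          Aent lam s s a b ((ρ : ℕ) / N) (ee m s j : ℕ) ((ρ : ℕ) % N) := by
  rw [eval_P a b _ W N hW, ← (finProdFinEquiv (m := s ^ m) (n := N)).sum_comp,
    Fintype.sum_prod_type, ← (ee m s).sum_comp]
  refine Finset.sum_congr rfl fun i _ => Finset.sum_congr rfl fun z _ => ?_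
  have hN : 0 < N := lt_of_le_of_lt (Nat.zero_le _) z.isLt
  have h1 : ((finProdFinEquiv (ee m s i, z) : Fin (s ^ m * N)) : ℕ) / N = (ee m s i : ℕ) := by
    simp only [finProdFinEquiv_apply_val]
    rw [Nat.add_mul_div_left _ _ hN, Nat.div_eq_of_lt z.isLt, zero_add]
  have h2 : ((finProdFinEquiv (ee m s i, z) : Fin (s ^ m * N)) : ℕ) % N = z := by
    simp only [finProdFinEquiv_apply_val]
    rw [Nat.add_mul_mod_self_left, Nat.mod_eq_of_lt z.isLt]
  have h3 : (finProdFinEquiv (ee m s i, z) : Fin (s ^ m * N)).divNat = ee m s i := by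
    ext; simpa [Fin.coe_divNat] using h1
  rw [rowv, h1, h2, h3, Equiv.symm_apply_apply, Aent_ee]
  rfl

lemma rowv_zero (W : (Matrix (Fin m → Fin s) (Fin m → Fin s) F)[X]) (N : ℕ) (hW : W.degree < N)
    (h : ∀ i', rowv W N i' = 0) : W = 0 := by
  ext z i' i
  by_cases hz : z < N
  · have := congrFun (h i') (finProdFinEquiv (ee m s i, ⟨z, hz⟩))
    have hN : 0 < N := lt_of_le_of_lt (Nat.zero_le _) hz
    have h3 : (finProdFinEquiv (ee m s i, (⟨z, hz⟩ : Fin N)) : Fin (s ^ m * N)).divNat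
        = ee m s i := by
      ext
      simp only [Fin.coe_divNat, finProdFinEquiv_apply_val]
      rw [Nat.add_mul_div_left _ _ hN, Nat.div_eq_of_lt hz, zero_add]
    rw [rowv, h3, Equiv.symm_apply_apply] at this
    simp only [finProdFinEquiv_apply_val] at this
    rw [Nat.add_mul_mod_self_left, Nat.mod_eq_of_lt hz] at this
    simpa using this
  · rw [coeff_eq_zero_of_degree_lt (lt_of_lt_of_le hW (by exact_mod_cast not_lt.mp hz))]
    simp

/-- matrix polynomial from row vectors -/
def polyOf (N : ℕ) (w : (Fin m → Fin s) → Fin (s ^ m * N) → F) :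
    (Matrix (Fin m → Fin s) (Fin m → Fin s) F)[X] :=
  ∑ z : Fin N, monomial (z : ℕ) (Matrix.of fun i' i => w i' (finProdFinEquiv (ee m s i, z)))

lemma polyOf_degree (N : ℕ) (w : (Fin m → Fin s) → Fin (s ^ m * N) → F) :
    (polyOf N w).degree < N := by
  refine lt_of_le_of_lt (degree_sum_le _ _) ?_
  rw [Finset.sup_lt_iff (WithBot.bot_lt_coe _)]
  intro z _
  exact lt_of_le_of_lt (degree_monomial_le _ _) (by exact_mod_cast z.isLt)

lemma polyOf_rowv (N : ℕ) (w : (Fin m → Fin s) → Fin (s ^ m * N) → F) (i' : Fin m → Fin s) :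
    rowv (polyOf N w) N i' = w i' := by
  ext ρ
  have hN : 0 < N := by
    rcases Nat.eq_zero_or_pos N with rfl | h
    · exact absurd ρ.isLt (by simp)
    · exact h
  have hc : (polyOf N w).coeff ((ρ : ℕ) % N)
      = Matrix.of fun i' i => w i' (finProdFinEquiv (ee m s i, ρ.modNat)) := by
    rw [polyOf, finsetSum_coeff, Finset.sum_eq_single ρ.modNat]
    · rw [coeff_monomial, if_pos]; simp [Fin.coe_modNat]
    · intro z _ hz
      rw [coeff_monomial, if_neg]
      intro h
      apply hz
      ext; simpa [Fin.coe_modNat] using h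
    · simp
  rw [rowv, hc, Matrix.of_apply, Equiv.apply_symm_apply]
  congr 1
  exact finProdFinEquiv.apply_symm_apply ρ

lemma enum_mem (B : Finset ℕ) (q : ℕ) (hq : q < B.card) : enum B q ∈ B := by
  have h : q < (B.sort (· ≤ ·)).length := by simpa using hq
  rw [enum, List.getD_eq_getElem _ _ h, ← Finset.mem_sort (· ≤ ·)]
  exact List.getElem_mem h

lemma enum_surj (B : Finset ℕ) (b : ℕ) (hb : b ∈ B) : ∃ q < B.card, enum B q = b := by
  rw [← Finset.mem_sort (· ≤ ·)] at hb
  obtain ⟨q, hq, h⟩ := List.getElem_of_mem hb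
  refine ⟨q, by simpa using hq, ?_⟩
  rw [enum, List.getD_eq_getElem _ _ hq, h]

lemma loc_surj (c : ℕ) (sz : ℕ → ℕ) (i o : ℕ) (hi : i < c) (ho : o < sz i) :
    ∃ κ < ∑ m ∈ Finset.range c, sz m, loc c sz κ = (i, o) := by
  induction c generalizing sz i with
  | zero => omega
  | succ c ih =>
    rw [Finset.sum_range_succ']
    cases i with
    | zero => exact ⟨o, by omega, by simp [loc, ho]⟩
    | succ i =>
      obtain ⟨κ, h1, h2⟩ := ih (fun i => sz (i + 1)) i (by omega) ho
      refine ⟨κ + sz 0, by omega, ?_⟩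
      simp [loc, h2]

/-- nodes indexed by naturals -/
def xN (lam : ℕ → F) (m s : ℕ) (a b : ℕ) : Matrix (Fin m → Fin s) (Fin m → Fin s) F :=
  if h : a < m ∧ b < s then Xm ⟨a, h.1⟩ ⟨b, h.2⟩ (nodef lam ⟨a, h.1⟩ ⟨b, h.2⟩) else 0

/-- eigenbases indexed by naturals -/
def pN (F : Type*) [Field F] (m s : ℕ) (a b : ℕ) : Matrix (Fin m → Fin s) (Fin m → Fin s) F :=
  if h : a < m ∧ b < s then Pm F ⟨a, h.1⟩ ⟨b, h.2⟩ else 1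

lemma pN_unit (a b : ℕ) : IsUnit (pN F m s a b) := by
  unfold pN
  split_ifs
  · exact ⟨⟨_, _, P_Pi _ _, Pi_P _ _⟩, rfl⟩
  · exact isUnit_one

lemma eval_N (lam : ℕ → F) (a b : ℕ) (ha : a < m) (hb : b < s)
    (W : (Matrix (Fin m → Fin s) (Fin m → Fin s) F)[X]) (N : ℕ) (hW : W.degree < N)
    (i' j : Fin m → Fin s) :
    (W.eval (xN lam m s a b) * pN F m s a b) i' j
      = ∑ ρ : Fin (s ^ m * N), rowv W N i' ρ *
          Aent lam s s a b ((ρ : ℕ) / N) (ee m s j : ℕ) ((ρ : ℕ) % N) := by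
  rw [xN, pN, dif_pos ⟨ha, hb⟩, dif_pos ⟨ha, hb⟩, eval_P_row lam _ _ W N hW]

lemma col_lt {ℓ q j v : ℕ} (hq : q < v) (hj : j < ℓ) : q * ℓ + j < ℓ * v := by
  calc q * ℓ + j < q * ℓ + ℓ := by omega
    _ = ℓ * (q + 1) := by ring
    _ ≤ ℓ * v := Nat.mul_le_mul_left _ hq

lemma col_div {ℓ q j : ℕ} (hj : j < ℓ) : (q * ℓ + j) / ℓ = q := by
  rw [add_comm, Nat.add_mul_div_right _ _ (by omega), Nat.div_eq_of_lt hj, zero_add]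

lemma col_mod {ℓ q j : ℕ} (hj : j < ℓ) : (q * ℓ + j) % ℓ = j := by
  rw [add_comm, Nat.add_mul_mod_self_right, Nat.mod_eq_of_lt hj]

lemma uni_local (lam : ℕ → F) (hs : 0 < s) (a : ℕ) (ha : a < m) (B : Finset ℕ)
    (hB : B ⊆ Finset.range s) (hdet : (AmatB lam s s (s ^ m) a B.card B).det ≠ 0) :
    Uni (xN lam m s a) B := by
  have hl : 0 < s ^ m := Nat.pow_pos hs
  have hBs : ∀ b ∈ B, b < s := fun b hb => Finset.mem_range.mp (hB hb)
  constructor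
  · intro W hW h0
    refine rowv_zero W _ hW fun i' => ?_
    refine Matrix.eq_zero_of_vecMul_eq_zero hdet ?_
    ext κ
    have hq : (κ : ℕ) / s ^ m < B.card := Nat.div_lt_of_lt_mul κ.isLt
    have hb := enum_mem B _ hq
    have := eval_N lam a _ ha (hBs _ hb) W _ hW i'
      ((ee m s).symm ⟨(κ : ℕ) % s ^ m, Nat.mod_lt _ hl⟩)
    rw [h0 _ hb, zero_mul, Equiv.apply_symm_apply] at this
    exact this.symm
  · intro Y
    let y : (Fin m → Fin s) → Fin (s ^ m * B.card) → F := fun i' κ =>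
      (Y (enum B ((κ : ℕ) / s ^ m)) * pN F m s a (enum B ((κ : ℕ) / s ^ m))) i'
        ((ee m s).symm ⟨(κ : ℕ) % s ^ m, Nat.mod_lt _ hl⟩)
    let w : (Fin m → Fin s) → Fin (s ^ m * B.card) → F := fun i' =>
      y i' ᵥ* (AmatB lam s s (s ^ m) a B.card B)⁻¹
    have hw : ∀ i', w i' ᵥ* AmatB lam s s (s ^ m) a B.card B = y i' := by
      intro i'
      simp only [w]
      rw [Matrix.vecMul_vecMul, Matrix.nonsing_inv_mul _ (isUnit_iff_ne_zero.mpr hdet),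
        Matrix.vecMul_one]
    refine ⟨polyOf _ w, polyOf_degree _ w, fun b hb => ?_⟩
    rw [← (pN_unit (F := F) (m := m) (s := s) a b).mul_left_inj]
    ext i' j
    obtain ⟨q, hq, rfl⟩ := enum_surj B b hb
    rw [eval_N lam a _ ha (hBs _ hb) _ _ (polyOf_degree _ w), polyOf_rowv]
    have hj := (ee m s j).isLt
    have := congrFun (hw i') ⟨q * s ^ m + (ee m s j : ℕ), col_lt hq hj⟩
    simp only [y, Matrix.vecMul, dotProduct, AmatB, Matrix.of_apply, col_div hj, col_mod hj,
      Fin.eta, Equiv.symm_apply_apply] at this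
    exact this

end MatPart

/-- Lemma 2 of the paper: if the `λ_i` are pairwise distinct and satisfy
the local constraints, then for any `c ≥ 1` pairwise distinct group indices
`a_0, …, a_{c−1} ∈ [n/s]` and nonempty subsets `B_0, …, B_{c−1} ⊆ [s]` with
`|B_0| + ⋯ + |B_{c−1}| = t ≤ r = n − k`, the matrix
`[A_{a₀,B₀}^{(t)} | ⋯ | A_{a_{c−1},B_{c−1}}^{(t)}]` has nonzero determinant. -/
theorem statement1 (F : Type*) [Field F] [Fintype F] (n k d s ℓ : ℕ)
    (hk : 1 ≤ k) (hkn : k < n) (hd₁ : k + 1 ≤ d) (hd₂ : d ≤ n - 1)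
    (hs : s = d - k + 1) (hdiv : s ∣ n) (hℓ : ℓ = s ^ (n / s))
    (lam : ℕ → F)
    (hdist : ∀ i < n * s, ∀ j < n * s, lam i = lam j → i = j)
    (hloc : LocalConstraints lam s s ℓ (n / s))
    (c t : ℕ) (hc : 1 ≤ c)
    (a : ℕ → ℕ) (ha : ∀ m < c, a m < n / s)
    (hainj : ∀ m₁ < c, ∀ m₂ < c, a m₁ = a m₂ → m₁ = m₂)
    (B : ℕ → Finset ℕ) (hBsub : ∀ m < c, B m ⊆ Finset.range s)
    (hBne : ∀ m < c, (B m).Nonempty)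
    (hsum : ∑ m ∈ Finset.range c, (B m).card = t)
    (htr : t ≤ n - k) :
    (MultiCat lam s s ℓ t c a B).det ≠ 0 := by
  subst hℓ
  have hs0 : 0 < s := by omega
  obtain ⟨m, rfl⟩ := hdiv
  rw [Nat.mul_div_cancel_left _ hs0] at *
  have : Nonempty (Fin m → Fin s) := ⟨fun _ => ⟨0, hs0⟩⟩
  have hB : ∀ i < c, ∀ b ∈ B i, b < s := fun i hi b hb => Finset.mem_range.mp (hBsub i hi hb)
  intro hdet
  obtain ⟨w, hw0, hw⟩ := Matrix.exists_vecMul_eq_zero_iff.mpr hdet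
  apply hw0
  have hidx : ∀ a < m, ∀ b < s, ∀ y < s, a * s * s + b * s + y < s * m * s := by
    intro a ha b hb y hy
    calc a * s * s + b * s + y < a * s * s + (b * s + s) := by omega
      _ = a * s * s + (b + 1) * s := by ring
      _ ≤ a * s * s + s * s := by gcongr; omega
      _ = (a + 1) * (s * s) := by ring
      _ ≤ m * (s * s) := by gcongr; omega
      _ = s * m * s := by ring
  have hnode : ∀ a a' b b' y y' : ℕ, a < m → a' < m → a ≠ a' → b < s → b' < s → y < s → y' < s →
      lam (a * s * s + b * s + y) ≠ lam (a' * s * s + b' * s + y') := by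
    intro a a' b b' y y' ha ha' hne hb hb' hy hy' h
    have h1 := hdist _ (hidx a ha b hb y hy) _ (hidx a' ha' b' hb' y' hy') h
    have hq : ∀ a b y : ℕ, b < s → y < s → (a * s * s + b * s + y) / s / s = a := by
      intro a b y hb hy
      rw [show a * s * s + b * s + y = (a * s + b) * s + y by ring, col_div hy, col_div hb]
    apply hne
    rw [← hq a b y hb hy, ← hq a' b' y' hb' hy', h1]
  have hW : polyOf t (fun _ => w) = 0 := by
    have hdeg : (polyOf (m := m) (s := s) t (fun _ => w)).degree
        < ((∑ i ∈ Finset.range c, (B i).card : ℕ) : WithBot ℕ) := by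
      rw [hsum]; exact polyOf_degree _ _
    refine uni_multi (fun i => xN lam m s (a i)) B (Finset.range c) ?_ ?_ ?_ _ hdeg ?_
    · intro i hi
      have hi := Finset.mem_range.mp hi
      exact uni_local lam hs0 (a i) (ha i hi) (B i) (hBsub i hi)
        (hloc (a i) (ha i hi) (B i) (hBsub i hi) (hBne i hi))
    · intro i hi i' hi' hne b hb b' hb'
      have hi := Finset.mem_range.mp hi
      have hi' := Finset.mem_range.mp hi'
      simp only [xN]
      rw [dif_pos ⟨ha i hi, hB i hi b hb⟩, dif_pos ⟨ha i' hi', hB i' hi' b' hb'⟩]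
      apply comm_XX
      intro h
      exact hne (hainj i hi i' hi' (congrArg Fin.val h))
    · intro i hi i' hi' hne b hb b' hb'
      have hi := Finset.mem_range.mp hi
      have hi' := Finset.mem_range.mp hi'
      have hne' : a i ≠ a i' := fun h => hne (hainj i hi i' hi' h)
      simp only [xN]
      rw [dif_pos ⟨ha i hi, hB i hi b hb⟩, dif_pos ⟨ha i' hi', hB i' hi' b' hb'⟩]
      apply unit_XX
      · intro h
        exact hne' (congrArg Fin.val h)
      · intro y y'
        exact hnode _ _ _ _ _ _ (ha i hi) (ha i' hi') hne' (hB i hi b hb) (hB i' hi' b' hb')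
          y.isLt y'.isLt
    · intro i hi b hb
      have hi := Finset.mem_range.mp hi
      rw [← (pN_unit (F := F) (m := m) (s := s) (a i) b).mul_left_inj, zero_mul]
      ext i' j
      obtain ⟨q, hq, rfl⟩ := enum_surj (B i) b hb
      have hj := (ee m s j).isLt
      obtain ⟨κ, hκ, hκl⟩ := loc_surj c (fun i => s ^ m * (B i).card) i
        (q * s ^ m + (ee m s j : ℕ)) hi (col_lt hq hj)
      rw [← Finset.mul_sum, hsum] at hκ
      rw [eval_N lam _ _ (ha i hi) (hB i hi _ hb) _ _ (polyOf_degree _ _), polyOf_rowv]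
      have := congrFun hw ⟨κ, hκ⟩
      simp only [Matrix.vecMul, dotProduct, MultiCat, Matrix.of_apply, hκl, col_div hj,
        col_mod hj] at this
      exact this
  rw [← polyOf_rowv t (fun _ => w) (fun _ => ⟨0, hs0⟩), hW]
  ext ρ
  simp [rowv]
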